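/- For every safe normal logic program P and X ∈ {E,A}, τ_EB(P) ≡ˣ τ_EH(P), i.e., τ_EB(P) and τ_EH(P) have exactly the same stableˣ expansions. -/

import Mathlib

set_option autoImplicit false

/-! # First-order autoepistemic logic (FO-AEL): syntax -/

structure Sig : Type 1 where
  Func : Type
  Pred : Type
  arF : Func → ℕ
  arP : Pred → ℕ

inductive Term (S : Sig) : Type
  | var : ℕ → Term S
  | func : (f : S.Func) → (Fin (S.arF f) → Term S) → Term S

inductive Formula (S : Sig) : Type
  | atom : (p : S.Pred) → (Fin (S.arP p) → Term S) → Formula S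
  | eq : Term S → Term S → Formula S
  | not : Formula S → Formula S
  | and : Formula S → Formula S → Formula S
  | ex : ℕ → Formula S → Formula S
  | box : Formula S → Formula S

namespace Term

variable {S : Sig}

/-- A term is ground if it contains no variables; ground terms are the *names*. -/
def isGround : Term S → Prop
  | var _ => False
  | func _ ts => ∀ i, (ts i).isGround

def hasVar (x : ℕ) : Term S → Prop
  | var y => y = x
  | func _ ts => ∃ i, (ts i).hasVar x

/-- Application of a partial (name) substitution to a term. -/
def subst (β : ℕ → Option (Term S)) : Term S → Term S
  | var x => (β x).getD (var x)
  | func f ts => func f (fun i => (ts i).subst β)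

/-- The function symbols occurring in a term. -/
def funcs : Term S → Set S.Func
  | var _ => ∅
  | func f ts => insert f (⋃ i, (ts i).funcs)

/-- `t` is a name (ground term) over the set `F` of function symbols. -/
def isNameOf (F : Set S.Func) : Term S → Prop
  | var _ => False
  | func f ts => f ∈ F ∧ ∀ i, (ts i).isNameOf F

end Term

namespace Formula

variable {S : Sig}

/-- A formula is objective if it is 𝖫-free. -/
def isObjective : Formula S → Prop
  | atom _ _ => True
  | eq _ _ => True
  | not φ => φ.isObjective
  | and φ ψ => φ.isObjective ∧ ψ.isObjective
  | ex _ φ => φ.isObjective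
  | box _ => False

def isGround : Formula S → Prop
  | atom _ ts => ∀ i, (ts i).isGround
  | eq t₁ t₂ => t₁.isGround ∧ t₂.isGround
  | not φ => φ.isGround
  | and φ ψ => φ.isGround ∧ ψ.isGround
  | ex _ _ => False
  | box φ => φ.isGround

def isAtomic : Formula S → Prop
  | atom _ _ => True
  | eq _ _ => True
  | not _ => False
  | and _ _ => False
  | ex _ _ => False
  | box _ => False

/-- The modal operator 𝖫 occurs only applied to (objective) atomic formulas. -/
def boxAtomic : Formula S → Prop
  | atom _ _ => True
  | eq _ _ => True
  | not φ => φ.boxAtomic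
  | and φ ψ => φ.boxAtomic ∧ ψ.boxAtomic
  | ex _ φ => φ.boxAtomic
  | box φ => φ.isAtomic

/-- Propositional formulas: built from 0-ary predicates only. -/
def isPropositional : Formula S → Prop
  | atom p _ => S.arP p = 0
  | eq _ _ => False
  | not φ => φ.isPropositional
  | and φ ψ => φ.isPropositional ∧ ψ.isPropositional
  | ex _ _ => False
  | box _ => False

def freeIn (x : ℕ) : Formula S → Prop
  | atom _ ts => ∃ i, (ts i).hasVar x
  | eq t₁ t₂ => t₁.hasVar x ∨ t₂.hasVar x
  | not φ => φ.freeIn x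
  | and φ ψ => φ.freeIn x ∨ ψ.freeIn x
  | ex y φ => x ≠ y ∧ φ.freeIn x
  | box φ => φ.freeIn x

/-- A formula is closed (a sentence) if it has no free variables. -/
def closed (φ : Formula S) : Prop := ∀ x, ¬ φ.freeIn x

/-- Capture-avoiding application of a partial name substitution (values are ground). -/
def subst (β : ℕ → Option (Term S)) : Formula S → Formula S
  | atom p ts => atom p (fun i => (ts i).subst β)
  | eq t₁ t₂ => eq (t₁.subst β) (t₂.subst β)
  | not φ => not (φ.subst β)
  | and φ ψ => and (φ.subst β) (ψ.subst β)
  | ex y φ => ex y (φ.subst (fun z => if z = y then none else β z))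
  | box φ => box (φ.subst β)

def funcs : Formula S → Set S.Func
  | atom _ ts => ⋃ i, (ts i).funcs
  | eq t₁ t₂ => t₁.funcs ∪ t₂.funcs
  | not φ => φ.funcs
  | and φ ψ => φ.funcs ∪ ψ.funcs
  | ex _ φ => φ.funcs
  | box φ => φ.funcs

def preds : Formula S → Set S.Pred
  | atom p _ => {p}
  | eq _ _ => ∅
  | not φ => φ.preds
  | and φ ψ => φ.preds ∪ ψ.preds
  | ex _ φ => φ.preds
  | box φ => φ.preds

/-- `φ ∨ ψ` as an abbreviation: `¬(¬φ ∧ ¬ψ)`. -/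
def or (φ ψ : Formula S) : Formula S := not (and (not φ) (not ψ))

/-- `φ ⊃ ψ` as an abbreviation: `¬(φ ∧ ¬ψ)`. -/
def imp (φ ψ : Formula S) : Formula S := not (and φ (not ψ))

/-- `∀x.φ` as an abbreviation: `¬∃x.¬φ`. -/
def all (x : ℕ) (φ : Formula S) : Formula S := not (ex x (not φ))

end Formula

/-! ## Semantics -/

structure Interp (S : Sig) where
  U : Type
  nonempty : Nonempty U
  interpF : (f : S.Func) → (Fin (S.arF f) → U) → U
  interpP : (p : S.Pred) → (Fin (S.arP p) → U) → Prop

noncomputable def Interp.dflt {S : Sig} (w : Interp S) : w.U := Classical.choice w.nonempty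

def Term.eval {S : Sig} (w : Interp S) (B : ℕ → w.U) : Term S → w.U
  | Term.var x => B x
  | Term.func f ts => w.interpF f (fun i => (ts i).eval w B)

/-- Evaluation of a ground term (the assignment is irrelevant). -/
noncomputable def Term.evalG {S : Sig} (w : Interp S) (t : Term S) : w.U :=
  t.eval w (fun _ => w.dflt)

/-- An individual is named if some name (ground term) denotes it. -/
def IsNamed {S : Sig} (w : Interp S) (k : w.U) : Prop :=
  ∃ t : Term S, t.isGround ∧ Term.evalG w t = k

/-- A name substitution `β` is associated with the variable assignment `B`:
its domain is exactly the set of variables whose `B`-value is named, and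
it assigns to each such variable a name denoting its `B`-value. -/
def Assoc {S : Sig} (w : Interp S) (B : ℕ → w.U) (β : ℕ → Option (Term S)) : Prop :=
  ∀ x : ℕ,
    (IsNamed w (B x) → (β x).isSome) ∧
    (∀ t : Term S, β x = some t → t.isGround ∧ Term.evalG w t = B x)

/-- The two semantics: any-name (E) and all-name (A). -/
inductive Sem : Type
  | any
  | all

/-- Satisfaction of a formula in an autoepistemic interpretation `⟨w,Γ⟩`
under a variable assignment, for the any-name (E) resp. all-name (A) semantics. -/
def Sat {S : Sig} (X : Sem) (w : Interp S) (Γ : Set (Formula S)) :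
    Formula S → (ℕ → w.U) → Prop
  | Formula.atom p ts, B => w.interpP p (fun i => (ts i).eval w B)
  | Formula.eq t₁ t₂, B => t₁.eval w B = t₂.eval w B
  | Formula.not φ, B => ¬ Sat X w Γ φ B
  | Formula.and φ ψ, B => Sat X w Γ φ B ∧ Sat X w Γ ψ B
  | Formula.ex x φ, B => ∃ u : w.U, Sat X w Γ φ (Function.update B x u)
  | Formula.box φ, B =>
      match X with
      | Sem.any => ∃ β, Assoc w B β ∧ (φ.subst β).closed ∧ φ.subst β ∈ Γ
      | Sem.all => ∀ β, Assoc w B β → (φ.subst β).closed ∧ φ.subst β ∈ Γ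

def ModelsF {S : Sig} (X : Sem) (w : Interp S) (Γ : Set (Formula S)) (φ : Formula S) : Prop :=
  ∀ B : ℕ → w.U, Sat X w Γ φ B

def ModelsT {S : Sig} (X : Sem) (w : Interp S) (Γ Φ : Set (Formula S)) : Prop :=
  ∀ φ ∈ Φ, ModelsF X w Γ φ

/-- `Φ ⊨ˣ_Γ φ`. -/
def Entails {S : Sig} (X : Sem) (Φ Γ : Set (Formula S)) (φ : Formula S) : Prop :=
  ∀ w : Interp S, ModelsT X w Γ Φ → ModelsF X w Γ φ

/-- The standard names assumption: all names are interpreted distinctly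
and every individual is named. -/
def SNA {S : Sig} (w : Interp S) : Prop :=
  (∀ t₁ t₂ : Term S, t₁.isGround → t₂.isGround → Term.evalG w t₁ = Term.evalG w t₂ → t₁ = t₂) ∧
  (∀ k : w.U, IsNamed w k)

/-- Entailment restricted to interpretations satisfying the standard names assumption. -/
def EntailsSN {S : Sig} (X : Sem) (Φ Γ : Set (Formula S)) (φ : Formula S) : Prop :=
  ∀ w : Interp S, SNA w → ModelsT X w Γ Φ → ModelsF X w Γ φ

/-- `T` is a stableˣ expansion of `Φ`. -/
def StableExp {S : Sig} (X : Sem) (Φ T : Set (Formula S)) : Prop :=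
  T = {φ | Entails X Φ T φ}

def objOf {S : Sig} (T : Set (Formula S)) : Set (Formula S) :=
  {φ ∈ T | φ.isObjective}

def ogOf {S : Sig} (T : Set (Formula S)) : Set (Formula S) :=
  {φ ∈ T | φ.isObjective ∧ φ.isGround}

def ogaOf {S : Sig} (T : Set (Formula S)) : Set (Formula S) :=
  {φ ∈ T | φ.isObjective ∧ φ.isGround ∧ φ.isAtomic}

def Consistent {S : Sig} (T : Set (Formula S)) : Prop := T ≠ Set.univ

/-- `Φ₁ ≡ˣ Φ₂`: same stableˣ expansions. -/
def ExpEquiv {S : Sig} (X : Sem) (Φ₁ Φ₂ : Set (Formula S)) : Prop :=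
  ∀ T, StableExp X Φ₁ T ↔ StableExp X Φ₂ T

/-- `Φ₁ ≡ˣ_γ Φ₂` for a selector `sel` (e.g. `ogaOf`): the stableˣ expansions
correspond with respect to `sel`. -/
def ExpEquivSel {S : Sig} (X : Sem) (sel : Set (Formula S) → Set (Formula S))
    (Φ₁ Φ₂ : Set (Formula S)) : Prop :=
  (∀ T, StableExp X Φ₁ T → ∃ T', StableExp X Φ₂ T' ∧ sel T = sel T') ∧
  (∀ T', StableExp X Φ₂ T' → ∃ T, StableExp X Φ₁ T ∧ sel T = sel T')

/-- Autoepistemicˣ consequences of `Φ`. -/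
def Cn {S : Sig} (X : Sem) (Φ : Set (Formula S)) : Set (Formula S) :=
  {φ | ∀ T, StableExp X Φ T → φ ∈ T}

def CnO {S : Sig} (X : Sem) (Φ : Set (Formula S)) : Set (Formula S) :=
  {φ ∈ Cn X Φ | φ.isObjective}

def CnOg {S : Sig} (X : Sem) (Φ : Set (Formula S)) : Set (Formula S) :=
  {φ ∈ Cn X Φ | φ.isObjective ∧ φ.isGround}

/-! ## Logic programs -/

structure PAtom (S : Sig) where
  p : S.Pred
  args : Fin (S.arP p) → Term S

namespace PAtom

variable {S : Sig}

def toFormula (a : PAtom S) : Formula S := Formula.atom a.p a.args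

def isGround (a : PAtom S) : Prop := ∀ i, (a.args i).isGround

def hasVar (x : ℕ) (a : PAtom S) : Prop := ∃ i, (a.args i).hasVar x

def substA (σ : ℕ → Term S) (a : PAtom S) : PAtom S :=
  ⟨a.p, fun i => (a.args i).subst (fun x => some (σ x))⟩

def funcs (a : PAtom S) : Set S.Func := ⋃ i, (a.args i).funcs

end PAtom

/-- A (disjunctive) rule `h₁ | … | h_l ← b₁,…,b_m, not c₁,…,not c_n`,
together with a list of the variables occurring in it. -/
structure Rule (S : Sig) where
  head : List (PAtom S)
  pos : List (PAtom S)
  neg : List (PAtom S)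
  vars : List ℕ

namespace Rule

variable {S : Sig}

def atoms (r : Rule S) : List (PAtom S) := r.head ++ r.pos ++ r.neg

def hasVar (x : ℕ) (r : Rule S) : Prop := ∃ a ∈ r.atoms, PAtom.hasVar x a

/-- Well-formedness: at least one head atom, and `vars` lists all variables of the rule. -/
def wf (r : Rule S) : Prop := r.head ≠ [] ∧ ∀ x, r.hasVar x → x ∈ r.vars

def isNormal (r : Rule S) : Prop := r.head.length = 1

def isGround (r : Rule S) : Prop := (∀ a ∈ r.atoms, a.isGround) ∧ r.vars = []

def isSafe (r : Rule S) : Prop := ∀ x, r.hasVar x → ∃ a ∈ r.pos, PAtom.hasVar x a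

def isPositive (r : Rule S) : Prop := r.neg = []

def applySubst (σ : ℕ → Term S) (r : Rule S) : Rule S :=
  ⟨r.head.map (PAtom.substA σ), r.pos.map (PAtom.substA σ), r.neg.map (PAtom.substA σ), []⟩

end Rule

abbrev Program (S : Sig) := Set (Rule S)

def progWf {S : Sig} (P : Program S) : Prop := ∀ r ∈ P, r.wf
def progNormal {S : Sig} (P : Program S) : Prop := ∀ r ∈ P, r.isNormal
def progGround {S : Sig} (P : Program S) : Prop := ∀ r ∈ P, r.isGround
def progSafe {S : Sig} (P : Program S) : Prop := ∀ r ∈ P, r.isSafe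
def progPositive {S : Sig} (P : Program S) : Prop := ∀ r ∈ P, r.isPositive

/-- The function symbols occurring in `P` (part of the signature `Σ_P`). -/
def progFuncs {S : Sig} (P : Program S) : Set S.Func :=
  {f | ∃ r ∈ P, ∃ a ∈ r.atoms, f ∈ a.funcs}

/-- The predicate symbols occurring in `P` (part of the signature `Σ_P`). -/
def progPreds {S : Sig} (P : Program S) : Set S.Pred :=
  {q | ∃ r ∈ P, ∃ a ∈ r.atoms, a.p = q}

/-- The ambient signature is exactly the signature `Σ_P` of `P`. -/
def fullSig {S : Sig} (P : Program S) : Prop :=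
  (∀ f : S.Func, f ∈ progFuncs P) ∧ (∀ q : S.Pred, q ∈ progPreds P)

/-- Standing assumption: `Σ_P` contains a 0-ary function symbol whenever it
has a predicate symbol of arity greater than 0. -/
def goodSig {S : Sig} (P : Program S) : Prop :=
  (∃ q ∈ progPreds P, 0 < S.arP q) → ∃ f ∈ progFuncs P, S.arF f = 0

/-! ## Embeddings of logic programs into FO-AEL -/

def andAll {S : Sig} : Formula S → List (Formula S) → Formula S
  | φ, [] => φ
  | φ, ψ :: rest => andAll (Formula.and φ ψ) rest

def orAll {S : Sig} : Formula S → List (Formula S) → Formula S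
  | φ, [] => φ
  | φ, ψ :: rest => orAll (Formula.or φ ψ) rest

/-- `impOf ants c` is `⋀ ants ⊃ c` (just `c` if there are no antecedents). -/
def impOf {S : Sig} : List (Formula S) → Formula S → Formula S
  | [], c => c
  | a :: rest, c => Formula.imp (andAll a rest) c

/-- Disjunction of a nonempty list (junk value on the empty list,
which is excluded by rule well-formedness). -/
def disjOf {S : Sig} : List (Formula S) → Formula S
  | [] => Formula.eq (Term.var 0) (Term.var 0)
  | h :: rest => orAll h rest

/-- Universal uclosure over the listed variables. -/
def uclosure {S : Sig} (vs : List ℕ) (φ : Formula S) : Formula S :=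
  vs.foldr Formula.all φ

def bodyHP {S : Sig} (r : Rule S) : List (Formula S) :=
  r.pos.map PAtom.toFormula ++ r.neg.map (fun c => Formula.not (Formula.box c.toFormula))

def bodyE {S : Sig} (r : Rule S) : List (Formula S) :=
  r.pos.map (fun b => Formula.and b.toFormula (Formula.box b.toFormula)) ++
    r.neg.map (fun c => Formula.not (Formula.box c.toFormula))

/-- `τ_HP(r)` resp. `τ^∨_HP(r)`. -/
def embHP {S : Sig} (r : Rule S) : Formula S :=
  uclosure r.vars (impOf (bodyHP r) (disjOf (r.head.map PAtom.toFormula)))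

/-- `τ_EB(r)` resp. `τ^∨_EB(r)`. -/
def embEB {S : Sig} (r : Rule S) : Formula S :=
  uclosure r.vars (impOf (bodyE r) (disjOf (r.head.map PAtom.toFormula)))

/-- `τ_EH(r)` resp. `τ^∨_EH(r)`. -/
def embEH {S : Sig} (r : Rule S) : Formula S :=
  uclosure r.vars (impOf (bodyE r)
    (disjOf (r.head.map (fun h => Formula.and h.toFormula (Formula.box h.toFormula)))))

/-- The unique-names axioms `¬𝖫(t₁=t₂) ⊃ t₁≠t₂` for distinct names of `Σ_P`. -/
def UNAax {S : Sig} (P : Program S) : Set (Formula S) :=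
  {φ | ∃ t₁ t₂ : Term S, t₁.isNameOf (progFuncs P) ∧ t₂.isNameOf (progFuncs P) ∧ t₁ ≠ t₂ ∧
        φ = Formula.imp (Formula.not (Formula.box (Formula.eq t₁ t₂)))
              (Formula.not (Formula.eq t₁ t₂))}

/-- The positive introspection axioms `α ⊃ 𝖫α` for objective ground atoms of `Σ_P`. -/
def PIAax {S : Sig} (P : Program S) : Set (Formula S) :=
  {φ | ∃ a : PAtom S, a.p ∈ progPreds P ∧ (∀ i, (a.args i).isNameOf (progFuncs P)) ∧
        φ = Formula.imp a.toFormula (Formula.box a.toFormula)}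

def ruleEmb {S : Sig} (emb : Rule S → Formula S) (P : Program S) : Set (Formula S) :=
  {φ | ∃ r ∈ P, φ = emb r}

def tauHP {S : Sig} (P : Program S) : Set (Formula S) := ruleEmb embHP P ∪ UNAax P
def tauEB {S : Sig} (P : Program S) : Set (Formula S) := ruleEmb embEB P ∪ UNAax P
def tauEH {S : Sig} (P : Program S) : Set (Formula S) := ruleEmb embEH P ∪ UNAax P
def tauHPv {S : Sig} (P : Program S) : Set (Formula S) := ruleEmb embHP P ∪ PIAax P ∪ UNAax P
def tauEBv {S : Sig} (P : Program S) : Set (Formula S) := ruleEmb embEB P ∪ PIAax P ∪ UNAax P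
def tauEHv {S : Sig} (P : Program S) : Set (Formula S) := ruleEmb embEH P ∪ UNAax P
def tauHPminus {S : Sig} (P : Program S) : Set (Formula S) := ruleEmb embHP P
def tauEHvminus {S : Sig} (P : Program S) : Set (Formula S) := ruleEmb embEH P

/-! ## Grounding and stable models -/

/-- The grounding of `P`: all ground instantiations of rules of `P`
obtained by replacing variables with names of `Σ_P`. -/
def grP {S : Sig} (P : Program S) : Program S :=
  {r' | ∃ r ∈ P, ∃ σ : ℕ → Term S,
        (∀ x, r.hasVar x → (σ x).isNameOf (progFuncs P)) ∧ r' = Rule.applySubst σ r}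

/-- A Herbrand interpretation: a set of ground atomic formulas. -/
def HerbrandI {S : Sig} (M : Set (Formula S)) : Prop :=
  ∀ φ ∈ M, φ.isAtomic ∧ φ.isGround

/-- `M` is a Herbrand model of the positive ground program `Q` (relative to the
names of `Σ_P`): rules are satisfied and `t = t ∈ M` for every name `t`. -/
def HerbrandModelOf {S : Sig} (P Q : Program S) (M : Set (Formula S)) : Prop :=
  HerbrandI M ∧
  (∀ r ∈ Q, (∀ b ∈ r.pos, PAtom.toFormula b ∈ M) → ∃ h ∈ r.head, PAtom.toFormula h ∈ M) ∧
  (∀ t : Term S, t.isNameOf (progFuncs P) → Formula.eq t t ∈ M)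

/-- The Gelfond–Lifschitz reduct of `gr(P)` with respect to `M`. -/
def reduct {S : Sig} (P : Program S) (M : Set (Formula S)) : Program S :=
  {r' | ∃ r ∈ grP P, (∀ c ∈ r.neg, PAtom.toFormula c ∉ M) ∧
        r' = ⟨r.head, r.pos, [], r.vars⟩}

/-- `M` is a stable model of `P`: a minimal Herbrand model of the reduct of `gr(P)` w.r.t. `M`. -/
def isStableModel {S : Sig} (P : Program S) (M : Set (Formula S)) : Prop :=
  HerbrandModelOf P (reduct P M) M ∧
  ∀ M', M' ⊆ M → HerbrandModelOf P (reduct P M) M' → M' = M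

/-! ## First-order theories and classes thereof -/

/-- An FO theory: a set of objective sentences. -/
def FOTheory {S : Sig} (Φ : Set (Formula S)) : Prop :=
  ∀ φ ∈ Φ, φ.isObjective ∧ φ.closed

def theoryFuncs {S : Sig} (Φ : Set (Formula S)) : Set S.Func := {f | ∃ φ ∈ Φ, f ∈ φ.funcs}
def theoryPreds {S : Sig} (Φ : Set (Formula S)) : Set S.Pred := {q | ∃ φ ∈ Φ, q ∈ φ.preds}

/-- The ambient signature is exactly the union of the signatures of `Φ` and `P`. -/
def CoverSig {S : Sig} (Φ : Set (Formula S)) (P : Program S) : Prop :=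
  (∀ f : S.Func, f ∈ theoryFuncs Φ ∪ progFuncs P) ∧
  (∀ q : S.Pred, q ∈ theoryPreds Φ ∪ progPreds P)

def exClosure {S : Sig} (ys : List ℕ) (φ : Formula S) : Formula S := ys.foldr Formula.ex φ

/-- A Horn sentence `(∀)(b₁ ∧ … ∧ b_n ⊃ h)` with atomic `b_i`, `h`
(the consequent `h` may be absent). -/
def isHornSentence {S : Sig} (φ : Formula S) : Prop :=
  ∃ (vs : List ℕ) (bs : List (Formula S)),
    (∀ b ∈ bs, b.isAtomic) ∧
    ((∃ h : Formula S, h.isAtomic ∧ φ = uclosure vs (impOf bs h)) ∨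
     (∃ b rest, bs = b :: rest ∧ φ = uclosure vs (Formula.not (andAll b rest))))

def HornTheory {S : Sig} (Φ : Set (Formula S)) : Prop :=
  FOTheory Φ ∧ ∀ φ ∈ Φ, isHornSentence φ

/-- A generalized Horn sentence `(∀)(b₁ ∧ … ∧ b_n ⊃ ∃ȳ.h)` with atomic `b_i`, `h`,
the variables `ȳ` occurring only in `h` (the consequent may be absent). -/
def isGHornSentence {S : Sig} (φ : Formula S) : Prop :=
  ∃ (vs : List ℕ) (bs : List (Formula S)),
    (∀ b ∈ bs, b.isAtomic) ∧
    ((∃ (ys : List ℕ) (h : Formula S), h.isAtomic ∧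
        (∀ y ∈ ys, ∀ b ∈ bs, ¬ b.freeIn y) ∧
        φ = uclosure vs (impOf bs (exClosure ys h))) ∨
     (∃ b rest, bs = b :: rest ∧ φ = uclosure vs (Formula.not (andAll b rest))))

def GHornTheory {S : Sig} (Φ : Set (Formula S)) : Prop :=
  FOTheory Φ ∧ ∀ φ ∈ Φ, isGHornSentence φ

def PropTheory {S : Sig} (Φ : Set (Formula S)) : Prop :=
  FOTheory Φ ∧ ∀ φ ∈ Φ, φ.isPropositional

/-! If a rule body holds under `B`, safety and the conjuncts `𝖫b` force every variable of the rule
to have a named value, so `B` is described by a name substitution `β`. The unique-names axioms make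
the choice of names immaterial: names equal in one model are believed, hence entailed, to be
equal. Therefore `𝖫φ` holds under `B` exactly when `φβ` belongs to the expansion `T`, a condition in
which the model no longer appears. The body instantiated by `β` is thus true in all models relative
to `T`, so all of them satisfy `hβ`, which puts `hβ` into `T` and makes `𝖫h` true under `B`. -/

section

variable {S : Sig} {X : Sem} {w w' : Interp S} {Γ T Φ Ψ : Set (Formula S)} {B B' : ℕ → w.U}
  {β γ : ℕ → Option (Term S)} {φ ψ : Formula S} {t t' : Term S} {x : ℕ} {V : Set ℕ}
  {r : Rule S} {h : PAtom S} {P : Program S}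

/-! ### Connectives and universal closure -/

theorem sat_imp : Sat X w Γ (φ.imp ψ) B ↔ (Sat X w Γ φ B → Sat X w Γ ψ B) := by
  simp only [Formula.imp, Sat, not_and, not_not]

theorem sat_andAll {l : List (Formula S)} :
    Sat X w Γ (andAll φ l) B ↔ Sat X w Γ φ B ∧ ∀ ψ ∈ l, Sat X w Γ ψ B := by
  induction l generalizing φ with
  | nil => simp [andAll]
  | cons ψ l ih => simp [andAll, ih, Sat, and_assoc]

theorem sat_impOf {l : List (Formula S)} :
    Sat X w Γ (impOf l φ) B ↔ ((∀ ψ ∈ l, Sat X w Γ ψ B) → Sat X w Γ φ B) := by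
  cases l with
  | nil => simp [impOf]
  | cons ψ l => simp [impOf, sat_imp, sat_andAll]

theorem modelsF_all : ModelsF X w Γ (φ.all x) ↔ ModelsF X w Γ φ := by
  simp only [ModelsF, Formula.all, Sat, not_exists, not_not]
  exact ⟨fun hφ B => by simpa only [Function.update_eq_self] using hφ B (B x),
    fun hφ B u => hφ _⟩

theorem modelsF_uclosure {vs : List ℕ} : ModelsF X w Γ (uclosure vs φ) ↔ ModelsF X w Γ φ := by
  induction vs with
  | nil => rfl
  | cons x vs ih => exact modelsF_all.trans ih

theorem modelsT_union :
    ModelsT X w Γ (Φ ∪ Ψ) ↔ ModelsT X w Γ Φ ∧ ModelsT X w Γ Ψ :=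
  forall₂_or_left

/-! ### Substitution -/

theorem Term.not_hasVar_of_isGround (ht : t.isGround) : ¬ t.hasVar x := by
  induction t with
  | var y => exact ht.elim
  | func f ts ih => exact fun ⟨i, hi⟩ => ih i (ht i) hi

theorem Term.isNameOf_of_isGround {F : Set S.Func} (hF : ∀ f, f ∈ F) (ht : t.isGround) :
    t.isNameOf F := by
  induction t with
  | var y => exact ht.elim
  | func f ts ih => exact ⟨hF f, fun i => ih i (ht i)⟩

theorem Term.eval_congr (hB : ∀ x, t.hasVar x → B x = B' x) : t.eval w B = t.eval w B' := by
  induction t with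
  | var y => exact hB y rfl
  | func f ts ih => exact congrArg (w.interpF f) (funext fun i => ih i fun x hx => hB x ⟨i, hx⟩)

theorem Term.eval_of_isGround (ht : t.isGround) : t.eval w B = t.evalG w :=
  Term.eval_congr fun _ hx => absurd hx (Term.not_hasVar_of_isGround ht)

/-- The assignment under which an expression has the value that its `β`-instance has under `B`. -/
def Interp.substAssign (w : Interp S) (β : ℕ → Option (Term S)) (B : ℕ → w.U) : ℕ → w.U :=
  fun x => ((β x).getD (.var x)).eval w B

theorem Term.eval_subst : (t.subst β).eval w B = t.eval w (w.substAssign β B) := by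
  induction t with
  | var y => rfl
  | func f ts ih => exact congrArg (w.interpF f) (funext ih)

/-- Name substitutions: partial substitutions whose values are all names. -/
def IsNameSubst (β : ℕ → Option (Term S)) : Prop :=
  ∀ x t, β x = some t → t.isGround

theorem IsNameSubst.erase (hβ : IsNameSubst β) (y : ℕ) :
    IsNameSubst fun z => if z = y then none else β z := by
  intro x t ht
  by_cases hxy : x = y
  · simp [hxy] at ht
  · exact hβ x t (by simpa only [if_neg hxy] using ht)

theorem IsNameSubst.substAssign_update (hβ : IsNameSubst β) (y : ℕ) (u : w.U) :
    w.substAssign (fun z => if z = y then none else β z) (Function.update B y u) =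
      Function.update (w.substAssign β B) y u := by
  funext z
  by_cases hz : z = y
  · simp [hz, Interp.substAssign, Term.eval]
  · cases hβz : β z with
    | none => simp [hz, hβz, Interp.substAssign, Term.eval]
    | some t => simp [hz, hβz, Interp.substAssign, Term.eval_of_isGround (hβ z t hβz)]

theorem IsNameSubst.hasVar_subst (hβ : IsNameSubst β) :
    (t.subst β).hasVar x ↔ t.hasVar x ∧ β x = none := by
  induction t with
  | var y =>
    cases hβy : β y with
    | none =>
      simp only [Term.subst, hβy, Option.getD_none, Term.hasVar]
      exact ⟨fun hyx => ⟨hyx, hyx ▸ hβy⟩, And.left⟩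
    | some s =>
      simp only [Term.subst, hβy, Option.getD_some, Term.hasVar]
      refine iff_of_false (Term.not_hasVar_of_isGround (hβ y s hβy)) ?_
      rintro ⟨rfl, hnone⟩
      simp [hβy] at hnone
  | func f ts ih => simp only [Term.subst, Term.hasVar, ih, exists_and_right]

theorem IsNameSubst.freeIn_subst (hβ : IsNameSubst β) :
    (φ.subst β).freeIn x ↔ φ.freeIn x ∧ β x = none := by
  induction φ generalizing β with
  | atom => simp only [Formula.subst, Formula.freeIn, hβ.hasVar_subst, exists_and_right]
  | eq => simp only [Formula.subst, Formula.freeIn, hβ.hasVar_subst, or_and_right]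
  | not _ ih => exact ih hβ
  | and _ _ ihφ ihψ => simp only [Formula.subst, Formula.freeIn, ihφ hβ, ihψ hβ, or_and_right]
  | ex y _ ih => simp +contextual [Formula.subst, Formula.freeIn, ih (hβ.erase y), and_assoc]
  | box _ ih => exact ih hβ

theorem Formula.isObjective.sat_congr (hφ : φ.isObjective) (hB : ∀ x, φ.freeIn x → B x = B' x) :
    Sat X w Γ φ B ↔ Sat X w Γ φ B' := by
  induction φ generalizing B B' with
  | atom p ts =>
    have hts : ∀ i, (ts i).eval w B = (ts i).eval w B' :=
      fun i => Term.eval_congr fun x hx => hB x ⟨i, hx⟩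
    simp only [Sat, hts]
  | eq t t' =>
    have ht : t.eval w B = t.eval w B' := Term.eval_congr fun x hx => hB x (.inl hx)
    have ht' : t'.eval w B = t'.eval w B' := Term.eval_congr fun x hx => hB x (.inr hx)
    simp only [Sat, ht, ht']
  | not _ ih => exact not_congr (ih hφ hB)
  | and _ _ ihφ ihψ =>
    exact and_congr (ihφ hφ.1 fun x hx => hB x (.inl hx)) (ihψ hφ.2 fun x hx => hB x (.inr hx))
  | ex y _ ih =>
    refine exists_congr fun u => ih hφ fun x hx => ?_
    by_cases hxy : x = y
    · simp only [hxy, Function.update_self]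
    · simpa only [Function.update_of_ne hxy] using hB x ⟨hxy, hx⟩
  | box => exact hφ.elim

theorem Formula.isObjective.sat_subst (hφ : φ.isObjective) (hβ : IsNameSubst β) :
    Sat X w Γ (φ.subst β) B ↔ Sat X w Γ φ (w.substAssign β B) := by
  induction φ generalizing β B with
  | atom => simp only [Formula.subst, Sat, Term.eval_subst]
  | eq => simp only [Formula.subst, Sat, Term.eval_subst]
  | not _ ih => exact not_congr (ih hφ hβ)
  | and _ _ ihφ ihψ => exact and_congr (ihφ hφ.1 hβ) (ihψ hφ.2 hβ)
  | ex y _ ih =>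
    simp only [Formula.subst, Sat, ih hφ (hβ.erase y), hβ.substAssign_update]
  | box => exact hφ.elim

/-! ### Name substitutions associated with an assignment -/

/-- `β` is a name substitution defined on `V` whose values there name the values of `B`. Unlike
`Assoc`, this says nothing about variables outside `V`, so that one `β` can describe assignments
of different interpretations. -/
structure NamesOn (w : Interp S) (B : ℕ → w.U) (β : ℕ → Option (Term S)) (V : Set ℕ) : Prop where
  isNameSubst : IsNameSubst β
  exists_name : ∀ x ∈ V, ∃ t, β x = some t ∧ t.evalG w = B x

namespace NamesOn

theorem mono {W : Set ℕ} (hβ : NamesOn w B β W) (hVW : V ⊆ W) : NamesOn w B β V :=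
  ⟨hβ.isNameSubst, fun x hx => hβ.exists_name x (hVW hx)⟩

theorem isNamed (hβ : NamesOn w B β V) (hx : x ∈ V) : IsNamed w (B x) := by
  obtain ⟨t, hβx, ht⟩ := hβ.exists_name x hx
  exact ⟨t, hβ.isNameSubst x t hβx, ht⟩

theorem closed_subst (hβ : NamesOn w B β {x | φ.freeIn x}) : (φ.subst β).closed := by
  intro x hx
  obtain ⟨hφx, hnone⟩ := hβ.isNameSubst.freeIn_subst.1 hx
  obtain ⟨t, hsome, -⟩ := hβ.exists_name x hφx
  simp [hnone] at hsome

theorem substAssign (hβ : NamesOn w B β V) (B₀ : ℕ → w'.U) :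
    NamesOn w' (w'.substAssign β B₀) β V := by
  refine ⟨hβ.isNameSubst, fun x hx => ?_⟩
  obtain ⟨t, hβx, -⟩ := hβ.exists_name x hx
  refine ⟨t, hβx, ?_⟩
  simp only [Interp.substAssign, hβx, Option.getD_some,
    Term.eval_of_isGround (hβ.isNameSubst x t hβx)]

end NamesOn

namespace Assoc

theorem isNameSubst (hβ : Assoc w B β) : IsNameSubst β :=
  fun x t hβx => ((hβ x).2 t hβx).1

theorem namesOn (hβ : Assoc w B β) (hV : ∀ x ∈ V, IsNamed w (B x)) : NamesOn w B β V := by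
  refine ⟨hβ.isNameSubst, fun x hx => ?_⟩
  obtain ⟨t, hβx⟩ := Option.isSome_iff_exists.1 ((hβ x).1 (hV x hx))
  exact ⟨t, hβx, ((hβ x).2 t hβx).2⟩

theorem isNamed_of_closed_subst (hβ : Assoc w B β) (hclosed : (φ.subst β).closed)
    (hx : φ.freeIn x) : IsNamed w (B x) := by
  cases hβx : β x with
  | none => exact absurd (hβ.isNameSubst.freeIn_subst.2 ⟨hx, hβx⟩) (hclosed x)
  | some t => exact ⟨t, (hβ x).2 t hβx⟩

end Assoc

theorem exists_assoc (w : Interp S) (B : ℕ → w.U) : ∃ β, Assoc w B β := by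
  have hname : ∀ x, ∃ o : Option (Term S), (IsNamed w (B x) → o.isSome) ∧
      ∀ t, o = some t → t.isGround ∧ t.evalG w = B x := by
    intro x
    by_cases hx : IsNamed w (B x)
    · obtain ⟨t, ht⟩ := hx
      exact ⟨some t, fun _ => rfl, by rintro _ ⟨⟩; exact ht⟩
    · exact ⟨none, fun hx' => absurd hx' hx, by simp⟩
  choose β hβ using hname
  exact ⟨β, hβ⟩

theorem exists_assoc_of_sat_box (hφ : Sat X w Γ (.box φ) B) :
    ∃ β, Assoc w B β ∧ (φ.subst β).closed ∧ φ.subst β ∈ Γ := by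
  cases X with
  | any => exact hφ
  | all =>
    obtain ⟨β, hβ⟩ := exists_assoc w B
    exact ⟨β, hβ, hφ β hβ⟩

theorem sat_box_of_forall_assoc
    (hφ : ∀ β, Assoc w B β → (φ.subst β).closed ∧ φ.subst β ∈ Γ) : Sat X w Γ (.box φ) B := by
  cases X with
  | any =>
    obtain ⟨β, hβ⟩ := exists_assoc w B
    exact ⟨β, hβ, hφ β hβ⟩
  | all => exact hφ

theorem isNamed_of_sat_box (hφ : Sat X w Γ (.box φ) B) (hx : φ.freeIn x) : IsNamed w (B x) := by
  obtain ⟨β, hβ, hclosed, -⟩ := exists_assoc_of_sat_box hφ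
  exact hβ.isNamed_of_closed_subst hclosed hx

/-! ### Belief in a stable expansion -/

theorem StableExp.mem_iff (hT : StableExp X Φ T) : φ ∈ T ↔ Entails X Φ T φ :=
  Set.ext_iff.1 hT φ

theorem stableExp_congr (hΦΨ : ∀ w, ModelsT X w T Φ ↔ ModelsT X w T Ψ) :
    StableExp X Φ T ↔ StableExp X Ψ T := by
  simp only [StableExp, Entails, hΦΨ]

theorem expEquiv_of_modelsT_iff
    (hΦΨ : ∀ T, StableExp X Φ T ∨ StableExp X Ψ T → ∀ w, ModelsT X w T Φ ↔ ModelsT X w T Ψ) :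
    ExpEquiv X Φ Ψ :=
  fun T => ⟨fun hT => (stableExp_congr (hΦΨ T (.inl hT))).1 hT,
    fun hT => (stableExp_congr (hΦΨ T (.inr hT))).2 hT⟩

/-- The unique-names axioms over all names of the signature `S`; `UNAax` is the version restricted
to the names built from the function symbols of a program. -/
def uniqueNames (S : Sig) : Set (Formula S) :=
  {φ | ∃ t t' : Term S, t.isGround ∧ t'.isGround ∧ t ≠ t' ∧
    φ = .imp (.not (.box (.eq t t'))) (.not (.eq t t'))}

theorem uniqueNames_subset_UNAax (hP : ∀ f, f ∈ progFuncs P) : uniqueNames S ⊆ UNAax P := by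
  rintro _ ⟨t, t', ht, ht', hne, rfl⟩
  exact ⟨t, t', Term.isNameOf_of_isGround hP ht, Term.isNameOf_of_isGround hP ht', hne, rfl⟩

namespace StableExp

theorem evalG_eq_of_evalG_eq (hT : StableExp X Φ T) (hw : ModelsT X w T (uniqueNames S))
    (hw' : ModelsT X w' T Φ) (ht : t.isGround) (ht' : t'.isGround)
    (heq : t.evalG w = t'.evalG w) : t.evalG w' = t'.evalG w' := by
  by_cases hne : t = t'
  · rw [hne]
  have hbox : Sat X w T (.box (.eq t t')) fun _ => w.dflt :=
    of_not_not fun hbox => sat_imp.1 (hw _ ⟨t, t', ht, ht', hne, rfl⟩ _) hbox heq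
  obtain ⟨β, hβ, -, hmem⟩ := exists_assoc_of_sat_box hbox
  have hobj : (Formula.eq t t').isObjective := trivial
  have hsat := hT.mem_iff.1 hmem w' hw' fun _ => w'.dflt
  rw [hobj.sat_subst hβ.isNameSubst] at hsat
  simpa only [Sat, Term.eval_of_isGround ht, Term.eval_of_isGround ht'] using hsat

theorem subst_mem_of_subst_mem (hT : StableExp X Φ T) (hw : ModelsT X w T (uniqueNames S))
    (hφ : φ.isObjective) (hβ : NamesOn w B β {x | φ.freeIn x})
    (hγ : NamesOn w B γ {x | φ.freeIn x}) (hmem : φ.subst β ∈ T) : φ.subst γ ∈ T := by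
  refine hT.mem_iff.2 fun w' hw' B₀ => ?_
  have hassign : ∀ x, φ.freeIn x → w'.substAssign γ B₀ x = w'.substAssign β B₀ x := by
    intro x hx
    obtain ⟨t, hβx, ht⟩ := hβ.exists_name x hx
    obtain ⟨t', hγx, ht'⟩ := hγ.exists_name x hx
    have ht_ground := hβ.isNameSubst x t hβx
    have ht'_ground := hγ.isNameSubst x t' hγx
    simp only [Interp.substAssign, hβx, hγx, Option.getD_some, Term.eval_of_isGround ht_ground,
      Term.eval_of_isGround ht'_ground]
    exact hT.evalG_eq_of_evalG_eq hw hw' ht'_ground ht_ground (ht'.trans ht.symm)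
  rw [hφ.sat_subst hγ.isNameSubst, hφ.sat_congr hassign, ← hφ.sat_subst hβ.isNameSubst]
  exact hT.mem_iff.1 hmem w' hw' B₀

theorem sat_box_iff (hT : StableExp X Φ T) (hw : ModelsT X w T (uniqueNames S))
    (hφ : φ.isObjective) (hβ : NamesOn w B β {x | φ.freeIn x}) :
    Sat X w T (.box φ) B ↔ φ.subst β ∈ T := by
  constructor
  · intro hbox
    obtain ⟨γ, hγ, -, hmem⟩ := exists_assoc_of_sat_box hbox
    exact hT.subst_mem_of_subst_mem hw hφ (hγ.namesOn fun _ => hβ.isNamed) hβ hmem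
  · refine fun hmem => sat_box_of_forall_assoc fun γ hγ => ?_
    have hγ_names := hγ.namesOn fun _ => hβ.isNamed
    exact ⟨hγ_names.closed_subst, hT.subst_mem_of_subst_mem hw hφ hβ hγ_names hmem⟩

end StableExp

/-! ### Rules and their embeddings -/

theorem PAtom.isObjective_toFormula (a : PAtom S) : a.toFormula.isObjective :=
  trivial

theorem sat_bodyE_iff : (∀ φ ∈ bodyE r, Sat X w Γ φ B) ↔
    (∀ b ∈ r.pos, Sat X w Γ b.toFormula B ∧ Sat X w Γ (.box b.toFormula) B) ∧
      ∀ c ∈ r.neg, ¬ Sat X w Γ (.box c.toFormula) B := by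
  simp only [bodyE, List.forall_mem_append, List.forall_mem_map, Sat]

theorem modelsF_embEB_iff (hr : r.head = [h]) : ModelsF X w Γ (embEB r) ↔
    ∀ B, (∀ φ ∈ bodyE r, Sat X w Γ φ B) → Sat X w Γ h.toFormula B := by
  rw [embEB, modelsF_uclosure]
  simp only [ModelsF, sat_impOf, hr, List.map, disjOf, orAll]

theorem modelsF_embEH_iff (hr : r.head = [h]) : ModelsF X w Γ (embEH r) ↔
    ∀ B, (∀ φ ∈ bodyE r, Sat X w Γ φ B) →
      Sat X w Γ h.toFormula B ∧ Sat X w Γ (.box h.toFormula) B := by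
  rw [embEH, modelsF_uclosure]
  simp only [ModelsF, sat_impOf, hr, List.map, disjOf, orAll, Sat]

theorem modelsF_embEB_of_embEH (hr : r.isNormal) (hw : ModelsF X w Γ (embEH r)) :
    ModelsF X w Γ (embEB r) := by
  obtain ⟨h, hh⟩ := List.length_eq_one_iff.1 hr
  exact (modelsF_embEB_iff hh).2 fun B hbody => ((modelsF_embEH_iff hh).1 hw B hbody).1

theorem Rule.isSafe.isNamed (hr : r.isSafe) (hbody : ∀ φ ∈ bodyE r, Sat X w Γ φ B)
    (hx : r.hasVar x) : IsNamed w (B x) := by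
  obtain ⟨b, hb, hbx⟩ := hr x hx
  exact isNamed_of_sat_box ((sat_bodyE_iff.1 hbody).1 b hb).2 hbx

theorem NamesOn.of_mem_atoms {a : PAtom S} (hβ : NamesOn w B β {x | r.hasVar x})
    (ha : a ∈ r.atoms) : NamesOn w B β {x | a.toFormula.freeIn x} :=
  hβ.mono fun _ hx => ⟨a, ha, hx⟩

namespace StableExp

theorem sat_bodyE_substAssign (hT : StableExp X Φ T) (hw : ModelsT X w T (uniqueNames S))
    (hw' : ModelsT X w' T Φ) (hw'_una : ModelsT X w' T (uniqueNames S))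
    (hβ : NamesOn w B β {x | r.hasVar x}) (hbody : ∀ φ ∈ bodyE r, Sat X w T φ B)
    (B₀ : ℕ → w'.U) : ∀ φ ∈ bodyE r, Sat X w' T φ (w'.substAssign β B₀) := by
  have hbox : ∀ a ∈ r.atoms, Sat X w T (.box a.toFormula) B ↔ a.toFormula.subst β ∈ T :=
    fun a ha => hT.sat_box_iff hw a.isObjective_toFormula (hβ.of_mem_atoms ha)
  have hbox' : ∀ a ∈ r.atoms,
      Sat X w' T (.box a.toFormula) (w'.substAssign β B₀) ↔ a.toFormula.subst β ∈ T :=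
    fun a ha => hT.sat_box_iff hw'_una a.isObjective_toFormula ((hβ.substAssign B₀).of_mem_atoms ha)
  obtain ⟨hpos, hneg⟩ := sat_bodyE_iff.1 hbody
  refine sat_bodyE_iff.2 ⟨fun b hb => ?_, fun c hc => ?_⟩
  · have hb_atoms : b ∈ r.atoms := by simp [Rule.atoms, hb]
    have hmem := (hbox b hb_atoms).1 (hpos b hb).2
    have hsat := hT.mem_iff.1 hmem w' hw' B₀
    exact ⟨(b.isObjective_toFormula.sat_subst hβ.isNameSubst).1 hsat,
      (hbox' b hb_atoms).2 hmem⟩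
  · have hc_atoms : c ∈ r.atoms := by simp [Rule.atoms, hc]
    rw [hbox' c hc_atoms, ← hbox c hc_atoms]
    exact hneg c hc

theorem modelsF_embEH_of_embEB (hT : StableExp X Φ T)
    (hΦ_una : ∀ w', ModelsT X w' T Φ → ModelsT X w' T (uniqueNames S))
    (hΦ_rule : ∀ w', ModelsT X w' T Φ → ModelsF X w' T (embEB r))
    (hnormal : r.isNormal) (hsafe : r.isSafe) (hw_una : ModelsT X w T (uniqueNames S))
    (hw_rule : ModelsF X w T (embEB r)) : ModelsF X w T (embEH r) := by
  obtain ⟨h, hh⟩ := List.length_eq_one_iff.1 hnormal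
  refine (modelsF_embEH_iff hh).2 fun B hbody => ⟨(modelsF_embEB_iff hh).1 hw_rule B hbody, ?_⟩
  obtain ⟨β, hβ_assoc⟩ := exists_assoc w B
  have hβ : NamesOn w B β {x | r.hasVar x} := hβ_assoc.namesOn fun _ => hsafe.isNamed hbody
  have hh_atoms : h ∈ r.atoms := by simp [Rule.atoms, hh]
  rw [hT.sat_box_iff hw_una h.isObjective_toFormula (hβ.of_mem_atoms hh_atoms), hT.mem_iff]
  intro w' hw' B₀
  rw [h.isObjective_toFormula.sat_subst hβ.isNameSubst]
  exact (modelsF_embEB_iff hh).1 (hΦ_rule w' hw') _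
    (hT.sat_bodyE_substAssign hw_una hw' (hΦ_una w' hw') hβ hbody B₀)

end StableExp

theorem modelsT_ruleEmb {emb : Rule S → Formula S} :
    ModelsT X w Γ (ruleEmb emb P) ↔ ∀ r ∈ P, ModelsF X w Γ (emb r) :=
  ⟨fun hw r hr => hw _ ⟨r, hr, rfl⟩, by rintro hw _ ⟨r, hr, rfl⟩; exact hw r hr⟩

theorem modelsT_embEB_union_of_embEH (hnormal : progNormal P)
    (hw : ModelsT X w Γ (ruleEmb embEH P ∪ Ψ)) : ModelsT X w Γ (ruleEmb embEB P ∪ Ψ) := by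
  rw [modelsT_union, modelsT_ruleEmb] at hw ⊢
  exact ⟨fun r hr => modelsF_embEB_of_embEH (hnormal r hr) (hw.1 r hr), hw.2⟩

theorem StableExp.modelsT_embEH_union_of_embEB (hT : StableExp X Φ T) (hnormal : progNormal P)
    (hsafe : progSafe P) (hΨ : uniqueNames S ⊆ Ψ)
    (hΦ : ∀ w', ModelsT X w' T Φ → ModelsT X w' T (ruleEmb embEB P ∪ Ψ))
    (hw : ModelsT X w T (ruleEmb embEB P ∪ Ψ)) : ModelsT X w T (ruleEmb embEH P ∪ Ψ) := by
  simp only [modelsT_union, modelsT_ruleEmb] at hΦ hw ⊢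
  refine ⟨fun r hr => ?_, hw.2⟩
  exact hT.modelsF_embEH_of_embEB (fun w' hw' φ hφ => (hΦ w' hw').2 φ (hΨ hφ))
    (fun w' hw' => (hΦ w' hw').1 r hr) (hnormal r hr) (hsafe r hr)
    (fun φ hφ => hw.2 φ (hΨ hφ)) (hw.1 r hr)

/-- For the background theory `Ψ = UNAax P` the two sides are `tauEB P` and `tauEH P`. -/
theorem stmt7_general (hnormal : progNormal P) (hsafe : progSafe P) (hΨ : uniqueNames S ⊆ Ψ) :
    ExpEquiv X (ruleEmb embEB P ∪ Ψ) (ruleEmb embEH P ∪ Ψ) := by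
  refine expEquiv_of_modelsT_iff fun T hT w => ⟨fun hw => ?_, modelsT_embEB_union_of_embEH hnormal⟩
  rcases hT with hT | hT
  · exact hT.modelsT_embEH_union_of_embEB hnormal hsafe hΨ (fun _ hw' => hw') hw
  · exact hT.modelsT_embEH_union_of_embEB hnormal hsafe hΨ
      (fun _ => modelsT_embEB_union_of_embEH hnormal) hw

end

/-- For every safe normal program `P`, `τ_EB(P)` and `τ_EH(P)`
have exactly the same stableˣ expansions. -/
theorem stmt7 {S : Sig} (X : Sem) (P : Program S)
    (hwf : progWf P) (hnormal : progNormal P) (hsafe : progSafe P)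
    (hfull : fullSig P) (hgood : goodSig P) :
    ExpEquiv X (tauEB P) (tauEH P) :=
  stmt7_general hnormal hsafe (uniqueNames_subset_UNAax hfull.1)
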